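/- arXiv:2604.15909 — 2 statements merged into one kernel-verified Lean document; each statement's English description precedes it below -/
import Mathlib

section
/- Let S be a vertex subset of a digraph D and let S₁, …, S_r be the strong components of the subdigraph of D induced by S. Then S is in general position in D if and only if: (i) each induced subdigraph on Sᵢ is a complete digraph (both arcs present between every pair of its vertices); (ii) the family {S₁, …, S_r} is distance-constant, i.e. for all i ≠ j, d(u,v) = d(u',v') for all u, u' ∈ Sᵢ and v, v' ∈ S_j (where distances may be infinite); and (iii) there are no indices i, j, k with d(Sᵢ,S_k) = d(Sᵢ,S_j) + d(S_j,S_k) < ∞. -/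
/-! The directed distance `ddist` behaves like a (possibly infinite, non-symmetric) metric, and a
vertex `w` lies on a geodesic from `u` to `v` exactly when `ddist u v = ddist u w + ddist w v < ⊤`
(`exists_geodesic_through_iff`): a walk of length `ddist u v` obtained by concatenating two
geodesics cannot repeat a vertex, since cutting out the closed part would shorten it. Hence general
position is a statement about distances only (`inGenPos_iff_ddist`).

If `S` is in general position, then two consecutive arcs `x → y → z` inside `S` force `x = z` or
`x → z`, so inside `S` reachability is the same as equality or adjacency
(`InGenPos.eq_or_adj_of_reachesIn`). This gives (i). For (ii), two adjacent vertices `x, x'` of one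
component satisfy `ddist x y ≤ 1 + ddist x' y`, and equality would put `x'` on a geodesic, so the
distance to `y` is the same from both. Given (ii), set distances are vertex distances, and (iii)
follows.

Conversely, a geodesic from `u` to `v` through a third vertex `w` of `S` violates (iii) if the three
vertices are in distinct components, (ii) if exactly one endpoint shares the component of `w`, and
(i) if both endpoints share a component, since adjacent vertices have nothing between them. -/

variable {V : Type*}

/-- `p` is a (nonempty) directed path: distinct vertices joined by consecutive arcs. -/
def IsDipath (A : V → V → Prop) (p : List V) : Prop :=
  p ≠ [] ∧ p.Nodup ∧ p.Chain' A

/-- `p` is a directed path from `u` to `v`. -/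
def IsDipathFrom (A : V → V → Prop) (u v : V) (p : List V) : Prop :=
  IsDipath A p ∧ p.head? = some u ∧ p.getLast? = some v

/-- The directed distance from `u` to `v`, as an extended natural number
(`⊤` if `v` is not reachable from `u`). -/
noncomputable def ddist (A : V → V → Prop) (u v : V) : ℕ∞ :=
  sInf {n : ℕ∞ | ∃ p : List V, IsDipathFrom A u v p ∧ (p.length : ℕ∞) = n + 1}

/-- `p` is a geodesic (shortest directed path) from `u` to `v`. -/
def IsGeodesic (A : V → V → Prop) (u v : V) (p : List V) : Prop :=
  IsDipathFrom A u v p ∧ (p.length : ℕ∞) = ddist A u v + 1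

/-- `S` is in general position: no geodesic between two vertices of `S` passes
through a third vertex of `S`. -/
def InGenPos (A : V → V → Prop) (S : Set V) : Prop :=
  ∀ u ∈ S, ∀ v ∈ S, ∀ p : List V, IsGeodesic A u v p →
    ∀ w ∈ p, w ∈ S → w = u ∨ w = v

/-- The general position number of a digraph on a finite vertex type. -/
noncomputable def gp (V : Type*) [Fintype V] (A : V → V → Prop) : ℕ :=
  sSup {n : ℕ | ∃ S : Set V, InGenPos A S ∧ S.ncard = n}

/-- The arc relation of the subdigraph induced by `S`. -/
def inducedRel (A : V → V → Prop) (S : Set V) : V → V → Prop :=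
  fun x y => A x y ∧ x ∈ S ∧ y ∈ S

/-- `u` reaches `v` by a directed path inside the subdigraph induced by `S`. -/
def ReachesIn (A : V → V → Prop) (S : Set V) (u v : V) : Prop :=
  ∃ p : List V, IsDipathFrom (inducedRel A S) u v p ∧ ∀ w ∈ p, w ∈ S

/-- The strong component of `u` in the subdigraph induced by `S`. -/
def strongCompIn (A : V → V → Prop) (S : Set V) (u : V) : Set V :=
  {v | ReachesIn A S u v ∧ ReachesIn A S v u}

/-- The distance from a set `W` to a set `W'`: the least distance from a vertex
of `W` to a vertex of `W'`. -/
noncomputable def setDDist (A : V → V → Prop) (W W' : Set V) : ℕ∞ :=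
  sInf {n : ℕ∞ | ∃ w ∈ W, ∃ w' ∈ W', ddist A w w' = n}

/-! ### Walks -/

/-- `p` lists the vertices of a directed walk from `u` to `v`; vertices may repeat. -/
def IsWalkList (A : V → V → Prop) (u v : V) (p : List V) : Prop :=
  p.IsChain A ∧ p.head? = some u ∧ p.getLast? = some v

theorem IsDipathFrom.isWalkList {A : V → V → Prop} {u v : V} {p : List V}
    (h : IsDipathFrom A u v p) : IsWalkList A u v p :=
  ⟨h.1.2.2, h.2.1, h.2.2⟩

theorem isWalkList_split {A : V → V → Prop} {u v w : V} {a b : List V} :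
    IsWalkList A u v (a ++ w :: b) ↔
      IsWalkList A u w (a ++ [w]) ∧ IsWalkList A w v (w :: b) := by
  unfold IsWalkList
  rw [List.isChain_split]
  cases a <;> simp [List.getLast?_cons, List.getLast?_append] <;> tauto

theorem IsWalkList.eq_append_singleton {A : V → V → Prop} {u v : V} {p : List V}
    (h : IsWalkList A u v p) : ∃ a, p = a ++ [v] := by
  obtain ⟨a, ha⟩ := List.getLast?_eq_some_iff.1 h.2.2
  exact ⟨a, ha⟩

theorem IsWalkList.eq_cons {A : V → V → Prop} {u v : V} {p : List V}
    (h : IsWalkList A u v p) : ∃ b, p = u :: b := by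
  obtain ⟨b, hb⟩ := List.head?_eq_some_iff.1 h.2.1
  exact ⟨b, hb⟩

/-- A walk with a repeated vertex can be shortened by cutting out the closed part. -/
theorem IsWalkList.exists_shorter {A : V → V → Prop} {u v : V} {p : List V}
    (h : IsWalkList A u v p) (hp : ¬ p.Nodup) :
    ∃ q, IsWalkList A u v q ∧ q.length < p.length ∧ q ⊆ p := by
  obtain ⟨x, hx⟩ := List.exists_duplicate_iff_not_nodup.2 hp
  obtain ⟨a, c, rfl, hc⟩ : ∃ a c, p = a ++ x :: c ∧ x ∈ c := by
    clear h hp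
    induction hx with
    | cons_mem h => exact ⟨[], _, rfl, h⟩
    | @cons_duplicate y l _ ih =>
      obtain ⟨a, c, rfl, hc⟩ := ih
      exact ⟨y :: a, c, rfl, hc⟩
  obtain ⟨b, d, rfl⟩ := List.append_of_mem hc
  obtain ⟨h1, h2⟩ := isWalkList_split.1 h
  have h3 : IsWalkList A x v (x :: d) :=
    (isWalkList_split (a := x :: b) (b := d)).1 (by simpa using h2) |>.2
  refine ⟨a ++ x :: d, isWalkList_split.2 ⟨h1, h3⟩, by simp, ?_⟩
  intro y; simp; tauto

theorem IsWalkList.exists_dipath {A : V → V → Prop} {u v : V} {p : List V}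
    (h : IsWalkList A u v p) :
    ∃ q, IsDipathFrom A u v q ∧ q.length ≤ p.length ∧ q ⊆ p := by
  induction hn : p.length using Nat.strong_induction_on generalizing p with
  | _ n ih =>
    by_cases hp : p.Nodup
    · refine ⟨p, ⟨⟨?_, hp, h.1⟩, h.2.1, h.2.2⟩, hn.le, fun _ => id⟩
      rintro rfl
      simpa using h.2.1
    · obtain ⟨q, hq, hlt, hsub⟩ := h.exists_shorter hp
      obtain ⟨r, hr, hle, hsub'⟩ := ih _ (hn ▸ hlt) hq rfl
      exact ⟨r, hr, by omega, fun _ hy => hsub (hsub' hy)⟩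

/-! ### Distances and geodesics -/

theorem IsWalkList.ddist_le {A : V → V → Prop} {u v : V} {p : List V} {n : ℕ}
    (h : IsWalkList A u v p) (hn : p.length ≤ n + 1) : ddist A u v ≤ n := by
  obtain ⟨q, hq, hle, -⟩ := h.exists_dipath
  obtain ⟨b, rfl⟩ := hq.isWalkList.eq_cons
  have hb : ddist A u v ≤ b.length := sInf_le ⟨_, hq, by simp⟩
  refine hb.trans ?_
  simp only [List.length_cons] at hle
  exact_mod_cast (by omega : b.length ≤ n)

theorem exists_isGeodesic {A : V → V → Prop} {u v : V} (h : ddist A u v ≠ ⊤) :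
    ∃ p, IsGeodesic A u v p := by
  have hne : {n : ℕ∞ | ∃ p : List V, IsDipathFrom A u v p ∧ (p.length : ℕ∞) = n + 1}.Nonempty := by
    by_contra hc
    rw [Set.not_nonempty_iff_eq_empty] at hc
    exact h (by rw [ddist, hc, sInf_empty])
  exact csInf_mem hne

theorem exists_isWalkList {A : V → V → Prop} {u v : V} {n : ℕ} (h : ddist A u v = n) :
    ∃ p, IsWalkList A u v p ∧ p.length = n + 1 := by
  obtain ⟨p, hp, hl⟩ := exists_isGeodesic (A := A) (u := u) (v := v) (by simp [h])
  refine ⟨p, hp.isWalkList, ?_⟩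
  rw [h] at hl
  exact_mod_cast hl

theorem ddist_self (A : V → V → Prop) (u : V) : ddist A u u = 0 := by
  have : IsWalkList A u u [u] := by simp [IsWalkList]
  simpa using this.ddist_le (n := 0) (by simp)

theorem eq_of_ddist_eq_zero {A : V → V → Prop} {u v : V} (h : ddist A u v = 0) : u = v := by
  obtain ⟨p, hp, hl⟩ := exists_isWalkList (n := 0) (by simpa using h)
  obtain ⟨x, rfl⟩ := List.length_eq_one_iff.1 hl
  obtain ⟨h1, h2⟩ : x = u ∧ x = v := by simpa using hp.2
  exact h1.symm.trans h2

theorem ddist_le_one {A : V → V → Prop} {u v : V} (h : A u v) : ddist A u v ≤ 1 := by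
  have : IsWalkList A u v [u, v] := by simp [IsWalkList, h]
  simpa using this.ddist_le (n := 1) (by simp)

theorem adj_of_ddist_eq_one {A : V → V → Prop} {u v : V} (h : ddist A u v = 1) : A u v := by
  obtain ⟨p, hp, hl⟩ := exists_isWalkList (n := 1) (by simpa using h)
  obtain ⟨x, y, rfl⟩ := List.length_eq_two.1 hl
  have := hp.2
  have := hp.1
  simp_all

/-- The concatenation of walks realising `ddist u w` and `ddist w v`. -/
theorem exists_isWalkList_through {A : V → V → Prop} {u v w : V} {m n : ℕ}
    (hm : ddist A u w = m) (hn : ddist A w v = n) :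
    ∃ p, IsWalkList A u v p ∧ p.length = m + n + 1 ∧ w ∈ p := by
  obtain ⟨p, hp, hpl⟩ := exists_isWalkList hm
  obtain ⟨q, hq, hql⟩ := exists_isWalkList hn
  obtain ⟨a, rfl⟩ := hp.eq_append_singleton
  obtain ⟨b, rfl⟩ := hq.eq_cons
  refine ⟨a ++ w :: b, isWalkList_split.2 ⟨hp, hq⟩, ?_, by simp⟩
  simp at hpl hql ⊢
  omega

theorem ddist_triangle (A : V → V → Prop) (u w v : V) :
    ddist A u v ≤ ddist A u w + ddist A w v := by
  cases hm : ddist A u w with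
  | top => simp
  | coe m =>
    cases hn : ddist A w v with
    | top => simp
    | coe n =>
      obtain ⟨p, hp, hl, -⟩ := exists_isWalkList_through hm hn
      exact_mod_cast hp.ddist_le hl.le

theorem exists_geodesic_through_iff {A : V → V → Prop} {u v w : V} :
    (∃ p, IsGeodesic A u v p ∧ w ∈ p) ↔
      ddist A u v ≠ ⊤ ∧ ddist A u v = ddist A u w + ddist A w v := by
  constructor
  · rintro ⟨p, ⟨hp, hl⟩, hw⟩
    obtain ⟨a, b, rfl⟩ := List.append_of_mem hw
    obtain ⟨h1, h2⟩ := isWalkList_split.1 hp.isWalkList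
    have h1 := h1.ddist_le (n := a.length) (by simp)
    have h2 := h2.ddist_le (n := b.length) (by simp)
    have hd : ddist A u v = (a.length : ℕ∞) + b.length := by
      refine ENat.add_left_injective_of_ne_top (n := 1) (by simp) ?_
      simp only [← hl]
      simp
      ring
    refine ⟨by rw [hd]; exact_mod_cast ENat.natCast_ne_top (a.length + b.length),
      le_antisymm (ddist_triangle A u w v) ?_⟩
    rw [hd]
    exact add_le_add h1 h2
  · rintro ⟨hfin, hd⟩
    have hfin' := hd ▸ hfin
    obtain ⟨m, hm⟩ := ENat.ne_top_iff_exists.1 (fun h => hfin' (by rw [h]; simp) : ddist A u w ≠ ⊤)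
    obtain ⟨n, hn⟩ := ENat.ne_top_iff_exists.1 (fun h => hfin' (by rw [h]; simp) : ddist A w v ≠ ⊤)
    obtain ⟨p, hp, hl, hw⟩ := exists_isWalkList_through hm.symm hn.symm
    have hdmn : ddist A u v = ((m + n : ℕ) : ℕ∞) := by rw [hd, ← hm, ← hn]; simp
    have hnd : p.Nodup := by
      by_contra hc
      obtain ⟨q, hq, hlt, -⟩ := hp.exists_shorter hc
      obtain ⟨b, rfl⟩ := hq.eq_cons
      have := hq.ddist_le (n := b.length) (by simp)
      rw [hdmn] at this
      have : m + n ≤ b.length := by exact_mod_cast this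
      simp only [List.length_cons] at hlt
      omega
    refine ⟨p, ⟨⟨⟨List.ne_nil_of_mem hw, hnd, hp.1⟩, hp.2.1, hp.2.2⟩, ?_⟩, hw⟩
    rw [hl, hdmn]
    simp

theorem inGenPos_iff_ddist {A : V → V → Prop} {S : Set V} :
    InGenPos A S ↔ ∀ u ∈ S, ∀ v ∈ S, ∀ w ∈ S, ddist A u v ≠ ⊤ →
      ddist A u v = ddist A u w + ddist A w v → w = u ∨ w = v := by
  constructor
  · intro h u hu v hv w hw h1 h2
    obtain ⟨p, hp, hwp⟩ := exists_geodesic_through_iff.2 ⟨h1, h2⟩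
    exact h u hu v hv p hp w hwp hw
  · intro h u hu v hv p hp w hwp hw
    obtain ⟨h1, h2⟩ := exists_geodesic_through_iff.1 ⟨p, hp, hwp⟩
    exact h u hu v hv w hw h1 h2

/-! ### Strong components -/

theorem ReachesIn.refl {A : V → V → Prop} {S : Set V} {u : V} (hu : u ∈ S) :
    ReachesIn A S u u :=
  ⟨[u], ⟨⟨by simp, by simp, List.isChain_singleton u⟩, rfl, rfl⟩, by simpa using hu⟩

theorem ReachesIn.trans {A : V → V → Prop} {S : Set V} {u v w : V}
    (h1 : ReachesIn A S u w) (h2 : ReachesIn A S w v) : ReachesIn A S u v := by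
  obtain ⟨p, hp, hpS⟩ := h1
  obtain ⟨q, hq, hqS⟩ := h2
  have hp := hp.isWalkList
  have hq := hq.isWalkList
  obtain ⟨a, rfl⟩ := hp.eq_append_singleton
  obtain ⟨b, rfl⟩ := hq.eq_cons
  obtain ⟨r, hr, -, hsub⟩ := (isWalkList_split.2 ⟨hp, hq⟩).exists_dipath
  refine ⟨r, hr, fun x hx => ?_⟩
  have := hsub hx
  simp only [List.mem_append] at this
  rcases this with h | h
  · exact hpS x (by simp [h])
  · exact hqS x h

theorem ReachesIn.left_mem {A : V → V → Prop} {S : Set V} {u v : V}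
    (h : ReachesIn A S u v) : u ∈ S := by
  obtain ⟨p, hp, hpS⟩ := h
  exact hpS u (List.mem_of_mem_head? (by simp [hp.2.1]))

theorem mem_of_mem_strongCompIn {A : V → V → Prop} {S : Set V} {u x : V}
    (h : x ∈ strongCompIn A S u) : x ∈ S :=
  h.2.left_mem

theorem self_mem_strongCompIn {A : V → V → Prop} {S : Set V} {u : V} (hu : u ∈ S) :
    u ∈ strongCompIn A S u :=
  ⟨.refl hu, .refl hu⟩

theorem strongCompIn_eq_of_mem {A : V → V → Prop} {S : Set V} {u x : V}
    (h : x ∈ strongCompIn A S u) : strongCompIn A S x = strongCompIn A S u := by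
  ext y
  exact ⟨fun hy => ⟨h.1.trans hy.1, hy.2.trans h.2⟩, fun hy => ⟨h.2.trans hy.1, hy.2.trans h.1⟩⟩

/-! ### General position sets -/

theorem InGenPos.adj_trans {A : V → V → Prop} {S : Set V} (h : InGenPos A S) {x y z : V}
    (hx : x ∈ S) (hy : y ∈ S) (hz : z ∈ S) (hxy : A x y) (hyz : A y z) : x = z ∨ A x z := by
  by_contra! hc
  rw [inGenPos_iff_ddist] at h
  have h1 := ddist_le_one hxy
  have h2 := ddist_le_one hyz
  have ht := ddist_triangle A x y z
  have h0 : ddist A x z ≠ 0 := fun h => hc.1 (eq_of_ddist_eq_zero h)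
  have h3 : ddist A x z ≠ 1 := fun h => hc.2 (adj_of_ddist_eq_one h)
  have hxz := h x hx z hz y hy
  cases hm : ddist A x y with
  | top => simp [hm] at h1
  | coe m =>
    cases hn : ddist A y z with
    | top => simp [hn] at h2
    | coe n =>
      cases hk : ddist A x z with
      | top => rw [hm, hn, hk] at ht; exact absurd ht (by norm_cast)
      | coe k =>
        rw [hm] at h1 ht hxz
        rw [hn] at h2 ht hxz
        rw [hk] at ht h0 h3 hxz
        norm_cast at *
        rcases hxz (by simp) (by omega) with rfl | rfl
        · exact hc.2 hyz
        · exact hc.2 hxy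

theorem InGenPos.eq_or_adj_of_reachesIn {A : V → V → Prop} {S : Set V} (h : InGenPos A S)
    {u v : V} (huv : ReachesIn A S u v) : u = v ∨ A u v := by
  obtain ⟨p, hp, hpS⟩ := huv
  have hw := hp.isWalkList
  clear hp
  induction p generalizing u with
  | nil => simp [IsWalkList] at hw
  | cons a l ih =>
    obtain rfl : a = u := by simpa using hw.2.1
    cases l with
    | nil => left; simpa using hw.2.2
    | cons b l =>
      have hc := List.isChain_cons_cons.1 hw.1
      have hv : v ∈ S := hpS v (List.mem_of_getLast? hw.2.2)
      have hb : IsWalkList (inducedRel A S) b v (b :: l) :=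
        ⟨hc.2, rfl, by have := hw.2.2; rwa [List.getLast?_cons_cons] at this⟩
      rcases ih (fun w hw => hpS w (by simp_all)) hb with rfl | hbv
      · exact .inr hc.1.1
      · exact h.adj_trans hc.1.2.1 hc.1.2.2 hv hc.1.1 hbv

/-- If all vertices of `W` have the same distance to all vertices of `W'`, the set distance is any vertex distance. -/
theorem setDDist_eq {A : V → V → Prop} {W W' : Set V} {x y : V} (hx : x ∈ W) (hy : y ∈ W')
    (h : ∀ x' ∈ W, ∀ y' ∈ W', ddist A x' y' = ddist A x y) : setDDist A W W' = ddist A x y := by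
  refine le_antisymm (sInf_le ⟨x, hx, y, hy, rfl⟩) (le_sInf ?_)
  rintro n ⟨x', hx', y', hy', rfl⟩
  exact (h x' hx' y' hy').ge

/-- Moving the source along an arc inside a general position set does not decrease the distance to a
target different from the new source. -/
theorem InGenPos.ddist_le_left {A : V → V → Prop} {S : Set V} (h : InGenPos A S) {x x' y : V}
    (hx : x ∈ S) (hx' : x' ∈ S) (hy : y ∈ S) (hA : x = x' ∨ A x x') (hne : x' ≠ y) :
    ddist A x y ≤ ddist A x' y := by
  by_cases hxx : x = x'
  · rw [hxx]
  have h1 := ddist_le_one (hA.resolve_left hxx)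
  have ht := ddist_triangle A x x' y
  by_contra! hc
  have hfin : ddist A x' y ≠ ⊤ := hc.ne_top
  have hle : 1 + ddist A x' y ≤ ddist A x y := by
    rw [add_comm]; exact Order.add_one_le_of_lt hc
  have hxy : ddist A x y ≠ ⊤ := fun e => by
    rw [e, top_le_iff, ENat.add_eq_top] at ht
    rcases ht with ht | ht
    · simp [ht] at h1
    · exact hfin ht
  rcases inGenPos_iff_ddist.1 h x hx y hy x' hx' hxy
    (le_antisymm ht ((add_le_add_left h1 _).trans hle)) with e | e
  · exact hxx e.symm
  · exact hne e

/-- Moving the target back along an arc inside a general position set does not decrease the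
distance from a source different from the new target. -/
theorem InGenPos.ddist_le_right {A : V → V → Prop} {S : Set V} (h : InGenPos A S) {x y y' : V}
    (hx : x ∈ S) (hy : y ∈ S) (hy' : y' ∈ S) (hA : y' = y ∨ A y' y) (hne : y' ≠ x) :
    ddist A x y ≤ ddist A x y' := by
  by_cases hyy : y' = y
  · rw [hyy]
  have h1 := ddist_le_one (hA.resolve_left hyy)
  have ht := ddist_triangle A x y' y
  by_contra! hc
  have hfin : ddist A x y' ≠ ⊤ := hc.ne_top
  have hle : ddist A x y' + 1 ≤ ddist A x y := Order.add_one_le_of_lt hc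
  have hxy : ddist A x y ≠ ⊤ := fun e => by
    rw [e, top_le_iff, ENat.add_eq_top] at ht
    rcases ht with ht | ht
    · exact hfin ht
    · simp [ht] at h1
  rcases inGenPos_iff_ddist.1 h x hx y hy y' hy' hxy
    (le_antisymm ht ((add_le_add_right h1 _).trans hle)) with e | e
  · exact hne e
  · exact hyy e

/-- Condition (ii), in the one-sided form that yields the equality by symmetry. -/
theorem InGenPos.ddist_le_of_mem_strongCompIn {A : V → V → Prop} {S : Set V} (h : InGenPos A S)
    {u u' x x' y y' : V} (hne : strongCompIn A S u ≠ strongCompIn A S u')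
    (hx : x ∈ strongCompIn A S u) (hx' : x' ∈ strongCompIn A S u)
    (hy : y ∈ strongCompIn A S u') (hy' : y' ∈ strongCompIn A S u') :
    ddist A x y ≤ ddist A x' y' := by
  have key : ∀ {a b}, a ∈ strongCompIn A S u → b ∈ strongCompIn A S u' → a ≠ b := by
    rintro a _ ha hb rfl
    exact hne ((strongCompIn_eq_of_mem ha).symm.trans (strongCompIn_eq_of_mem hb))
  have mS := fun {a b} => mem_of_mem_strongCompIn (A := A) (S := S) (u := a) (x := b)
  exact (h.ddist_le_left (mS hx) (mS hx') (mS hy)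
      (h.eq_or_adj_of_reachesIn (hx.2.trans hx'.1)) (key hx' hy)).trans
    (h.ddist_le_right (mS hx') (mS hy) (mS hy')
      (h.eq_or_adj_of_reachesIn (hy'.2.trans hy.1)) (key hx' hy').symm)

/-- Characterisation of general position sets: `S` is in general position iff
(i) every strong component of the subdigraph induced by `S` is a complete digraph,
(ii) the family of strong components is distance-constant, and
(iii) for no three distinct strong components `Sᵢ, S_j, S_k` does
`d(Sᵢ,S_k) = d(Sᵢ,S_j) + d(S_j,S_k) < ∞` hold. -/
theorem inGenPos_iff_strongComponents [Fintype V] (A : V → V → Prop)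
    (hloopless : ∀ x, ¬ A x x) (S : Set V) :
    InGenPos A S ↔
      ((∀ u ∈ S, ∀ x ∈ strongCompIn A S u, ∀ y ∈ strongCompIn A S u,
          x ≠ y → A x y) ∧
       (∀ u ∈ S, ∀ u' ∈ S, strongCompIn A S u ≠ strongCompIn A S u' →
          ∀ x ∈ strongCompIn A S u, ∀ x' ∈ strongCompIn A S u,
          ∀ y ∈ strongCompIn A S u', ∀ y' ∈ strongCompIn A S u',
            ddist A x y = ddist A x' y') ∧
       ¬ ∃ i ∈ S, ∃ j ∈ S, ∃ k ∈ S,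
          strongCompIn A S i ≠ strongCompIn A S j ∧
          strongCompIn A S j ≠ strongCompIn A S k ∧
          strongCompIn A S i ≠ strongCompIn A S k ∧
          setDDist A (strongCompIn A S i) (strongCompIn A S k) ≠ ⊤ ∧
          setDDist A (strongCompIn A S i) (strongCompIn A S k) =
            setDDist A (strongCompIn A S i) (strongCompIn A S j) +
              setDDist A (strongCompIn A S j) (strongCompIn A S k)) := by
  constructor
  · intro h
    have hii : ∀ u ∈ S, ∀ u' ∈ S, strongCompIn A S u ≠ strongCompIn A S u' →
        ∀ x ∈ strongCompIn A S u, ∀ x' ∈ strongCompIn A S u,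
        ∀ y ∈ strongCompIn A S u', ∀ y' ∈ strongCompIn A S u',
          ddist A x y = ddist A x' y' := fun u _ u' _ hne x hx x' hx' y hy y' hy' =>
      le_antisymm (h.ddist_le_of_mem_strongCompIn hne hx hx' hy hy')
        (h.ddist_le_of_mem_strongCompIn hne hx' hx hy' hy)
    refine ⟨fun u _ x hx y hy hxy =>
      (h.eq_or_adj_of_reachesIn (hx.2.trans hy.1)).resolve_left hxy, hii, ?_⟩
    have hset : ∀ i ∈ S, ∀ j ∈ S, strongCompIn A S i ≠ strongCompIn A S j →
        setDDist A (strongCompIn A S i) (strongCompIn A S j) = ddist A i j :=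
      fun i hi j hj hij => setDDist_eq (self_mem_strongCompIn hi) (self_mem_strongCompIn hj)
        fun x hx y hy => hii i hi j hj hij x hx i (self_mem_strongCompIn hi) y hy j
          (self_mem_strongCompIn hj)
    rintro ⟨i, hi, j, hj, k, hk, hij, hjk, hik, hfin, heq⟩
    rw [hset i hi k hk hik] at hfin heq
    rw [hset i hi j hj hij, hset j hj k hk hjk] at heq
    rcases inGenPos_iff_ddist.1 h i hi k hk j hj hfin heq with rfl | rfl
    · exact hij rfl
    · exact hjk rfl
  · rintro ⟨hi, hii, hiii⟩
    have hset : ∀ i ∈ S, ∀ j ∈ S, strongCompIn A S i ≠ strongCompIn A S j →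
        setDDist A (strongCompIn A S i) (strongCompIn A S j) = ddist A i j :=
      fun i hi j hj hij => setDDist_eq (self_mem_strongCompIn hi) (self_mem_strongCompIn hj)
        fun x hx y hy => hii i hi j hj hij x hx i (self_mem_strongCompIn hi) y hy j
          (self_mem_strongCompIn hj)
    rw [inGenPos_iff_ddist]
    intro u hu v hv w hw hfin heq
    by_contra! hc
    have huS := self_mem_strongCompIn (A := A) hu
    have hvS := self_mem_strongCompIn (A := A) hv
    have hwS := self_mem_strongCompIn (A := A) hw
    have huw : ddist A u w ≠ 0 := fun e => hc.1 (eq_of_ddist_eq_zero e).symm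
    have hwv : ddist A w v ≠ 0 := fun e => hc.2 (eq_of_ddist_eq_zero e)
    by_cases huv : strongCompIn A S u = strongCompIn A S v
    · -- Adjacent or equal endpoints are at distance at most one, leaving no room for `w`.
      have hle : ddist A u v ≤ 1 := by
        by_cases e : u = v
        · rw [e, ddist_self]; simp
        · exact ddist_le_one (hi v hv u (huv ▸ huS) v hvS e)
      rw [heq] at hle
      have h2 := add_le_add (Order.one_le_iff_pos.2 (pos_iff_ne_zero.2 huw))
        (Order.one_le_iff_pos.2 (pos_iff_ne_zero.2 hwv))
      exact absurd (h2.trans hle) (by norm_num)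
    · by_cases h1 : strongCompIn A S u = strongCompIn A S w
      · have e := hii u hu v hv huv u huS w (h1 ▸ hwS) v hvS v hvS
        rw [← e] at heq
        exact huw (ENat.add_left_injective_of_ne_top hfin (by simpa using heq.symm))
      · by_cases h2 : strongCompIn A S w = strongCompIn A S v
        · have e := hii u hu v hv huv u huS u huS v hvS w (h2 ▸ hwS)
          rw [← e] at heq
          exact hwv (ENat.add_right_injective_of_ne_top hfin (by simpa using heq.symm))
        · refine hiii ⟨u, hu, w, hw, v, hv, h1, h2, huv, ?_⟩
          rw [hset u hu v hv huv, hset u hu w hw h1, hset w hw v hv h2]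
          exact ⟨hfin, heq⟩
end

section
/- Let d ≥ 1 and let n = qd + r with q ≥ 0 and 2 ≤ r ≤ d + 1, and suppose d < n. Then the set S = {0, 1, …, r−1} is in general position in the circulant digraph Circ(n, {1, 2, …, d}). -/
/-!
The point is that in `Circ(n, {1, …, d})` a walk with `ℓ` arcs advances by at most `ℓ * d`
(`exists_add_of_chain`), while any advance by `m < n` with `k * d < m ≤ (k + 1) * d` is realised
by a path with `k + 1` arcs (`exists_dipath_add`).

Let `i, j < r`. If `i < j` the distance from `i` to `j` is `1`, so a geodesic has no inner vertex;
if `i = j` it is a single vertex. If `j < i`, the advance needed is `n - (i - j)`, which lies in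
`(q * d, (q + 1) * d]`, so the distance is at most `q + 1`. An inner vertex `k < r` of a geodesic splits it into two pieces with
at most `q` arcs each. Such a piece advances by at most `q * d = n - r`, which is too little to get
from a residue below `r` to a smaller one (`le_of_short_advance`); hence `i ≤ k ≤ j`,
a contradiction.
-/

variable {V : Type*}

/-- The arc relation of the circulant digraph `Circ(n, {1, 2, …, d})`. -/
def circA (n d : ℕ) : ZMod n → ZMod n → Prop :=
  fun x y => ∃ c : ℕ, 1 ≤ c ∧ c ≤ d ∧ y = x + (c : ZMod n)

/-- The walk `u :: p` has `p.length` arcs, each advancing by at most `d`. -/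
lemma exists_add_of_chain {n d : ℕ} (p : List (ZMod n)) (u v : ZMod n)
    (hc : (u :: p).IsChain (circA n d)) (hv : (u :: p).getLast? = some v) :
    ∃ s : ℕ, s ≤ p.length * d ∧ v = u + (s : ZMod n) := by
  induction p generalizing u with
  | nil =>
    refine ⟨0, by simp, ?_⟩
    simpa using hv.symm
  | cons y p ih =>
    rw [List.isChain_cons_cons] at hc
    obtain ⟨⟨c, -, hcd, rfl⟩, hc⟩ := hc
    obtain ⟨s, hs, rfl⟩ := ih _ hc (by simpa using hv)
    refine ⟨c + s, ?_, by push_cast; ring⟩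
    rw [List.length_cons, Nat.succ_mul]
    omega

lemma add_natCast_ne {n : ℕ} (x : ZMod n) (a : ℕ) (h0 : 0 < a) (han : a < n) :
    x ≠ x + (a : ZMod n) := by
  intro h
  have h' : (a : ZMod n) = 0 := by simpa using h.symm
  rw [ZMod.natCast_eq_zero_iff] at h'
  exact absurd (Nat.le_of_dvd h0 h') (by omega)

/-- The greedy path: steps of length `d`, then one last step of length at most `d`. The bound on
the vertices visited is what keeps them distinct in the induction. -/
lemma exists_dipath_add {n d : ℕ} (hd : 1 ≤ d) (k m : ℕ) (x : ZMod n)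
    (h1 : k * d < m) (h2 : m ≤ (k + 1) * d) (hm : m < n) :
    ∃ p : List (ZMod n), IsDipathFrom (circA n d) x (x + (m : ZMod n)) p ∧ p.length = k + 2 ∧
      ∀ y ∈ p, ∃ a : ℕ, a ≤ m ∧ y = x + (a : ZMod n) := by
  induction k generalizing m x with
  | zero =>
    refine ⟨[x, x + (m : ZMod n)], ⟨⟨by simp, ?_, ?_⟩, by simp, by simp⟩, by simp, ?_⟩
    · simpa using add_natCast_ne x m (by omega) hm
    · exact List.isChain_pair.2 ⟨m, by omega, by omega, rfl⟩
    · intro y hy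
      rcases List.mem_pair.1 hy with rfl | rfl
      · exact ⟨0, by omega, by simp⟩
      · exact ⟨m, le_rfl, rfl⟩
  | succ k ih =>
    have e1 : (k + 1) * d = k * d + d := by ring
    have e2 : (k + 1 + 1) * d = (k + 1) * d + d := by ring
    obtain ⟨p, ⟨⟨hne, hnd, hch⟩, hh, hl⟩, hlen, hmem⟩ :=
      ih (m - d) (x + (d : ZMod n)) (by omega) (by omega) (by omega)
    have hx : x + (d : ZMod n) + ((m - d : ℕ) : ZMod n) = x + (m : ZMod n) := by
      rw [add_assoc, ← Nat.cast_add, Nat.add_sub_cancel' (by omega)]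
    refine ⟨x :: p, ⟨⟨by simp, ?_, ?_⟩, by simp, ?_⟩, by simp [hlen], ?_⟩
    · refine List.nodup_cons.2 ⟨fun hxp => ?_, hnd⟩
      obtain ⟨a, ha, hxa⟩ := hmem x hxp
      refine add_natCast_ne x (d + a) (by omega) (by omega) ?_
      rw [Nat.cast_add, ← add_assoc]
      exact hxa
    · refine List.isChain_cons.2 ⟨fun y hy => ?_, hch⟩
      rw [hh, Option.mem_some_iff] at hy
      exact ⟨d, hd, le_rfl, hy.symm⟩
    · rw [List.getLast?_cons, hl, hx]
      rfl
    · intro y hy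
      rcases List.mem_cons.1 hy with rfl | hy
      · exact ⟨0, by omega, by simp⟩
      · obtain ⟨a, ha, rfl⟩ := hmem y hy
        exact ⟨d + a, by omega, by push_cast; ring⟩

lemma IsGeodesic.length_le {A : V → V → Prop} {u v : V} {p p' : List V}
    (hp : IsGeodesic A u v p) (hp' : IsDipathFrom A u v p') : p.length ≤ p'.length := by
  obtain ⟨m, hm⟩ : ∃ m, p'.length = m + 1 :=
    Nat.exists_eq_add_of_le' (List.length_pos_iff.2 hp'.1.1)
  have h : ddist A u v ≤ (m : ℕ∞) := sInf_le ⟨p', hp', by rw [hm]; push_cast; rfl⟩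
  have h' : (p.length : ℕ∞) ≤ (m : ℕ∞) + 1 := by
    rw [hp.2]
    gcongr
  rw [hm]
  exact_mod_cast h'

/-- Going from a residue `i < r` to a smaller one wraps around, hence needs an advance of more
than `n - r`. -/
lemma le_of_short_advance {n r i k s : ℕ} (hi : i < r) (hs : s + r ≤ n)
    (h : (k : ZMod n) = (i : ZMod n) + (s : ZMod n)) : i ≤ k := by
  by_contra! hki
  rw [← Nat.cast_add, ZMod.natCast_eq_natCast_iff, Nat.modEq_iff_dvd' (by omega)] at h
  exact absurd (Nat.le_of_dvd (by omega) h) (by omega)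

/-- In `Circ(n, {1, …, d})` with `n = q·d + r`, `2 ≤ r ≤ d + 1`, the set
`{0, 1, …, r - 1}` is in general position. -/
theorem circulant_initial_segment_inGenPos (d q r n : ℕ) (hd : 1 ≤ d)
    (hr : 2 ≤ r) (hrd : r ≤ d + 1) (hn : n = q * d + r) (hdn : d < n) :
    InGenPos (circA n d) {x : ZMod n | ∃ i : ℕ, i < r ∧ x = (i : ZMod n)} := by
  rintro _ ⟨i, hi, rfl⟩ _ ⟨j, hj, rfl⟩ p hp w hw ⟨k, hk, rfl⟩
  by_contra! hne
  obtain ⟨hki, hkj⟩ := hne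
  obtain ⟨⟨-, -, hch⟩, hh, hl⟩ := hp.1
  obtain ⟨l₁, l₂, rfl⟩ := List.append_of_mem hw
  -- Since `k` is neither endpoint, both pieces of the geodesic contain an arc.
  obtain _ | ⟨y, l₁⟩ := l₁
  · exact hki (by simpa using hh)
  obtain _ | ⟨z, l₂⟩ := l₂
  · rw [List.getLast?_concat] at hl
    exact hkj (Option.some.inj hl)
  obtain rfl : y = (i : ZMod n) := by simpa using hh
  have hlen : ((i : ZMod n) :: l₁ ++ (k : ZMod n) :: z :: l₂).length
      = l₁.length + l₂.length + 3 := by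
    simp only [List.length_append, List.length_cons]
    omega
  have hc : (((i : ZMod n) :: l₁) ++ (k : ZMod n) :: z :: l₂).IsChain (circA n d) := hch
  rw [List.isChain_split] at hc
  obtain ⟨s, hs, hsk⟩ := exists_add_of_chain (l₁ ++ [(k : ZMod n)]) i k hc.1 (by
    rw [← List.cons_append, List.getLast?_concat])
  obtain ⟨t, ht, htj⟩ := exists_add_of_chain (z :: l₂) k j hc.2 (by
    rwa [List.getLast?_append_of_ne_nil _ (by simp)] at hl)
  simp only [List.length_append, List.length_cons, List.length_nil] at hs ht
  have e : (q + 1) * d = q * d + d := by ring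
  rcases lt_trichotomy i j with hij | rfl | hij
  · obtain ⟨p', hp', hlen', -⟩ := exists_dipath_add (n := n) hd 0 (j - i) (i : ZMod n)
      (by omega) (by omega) (by omega)
    rw [← Nat.cast_add, Nat.add_sub_cancel' hij.le] at hp'
    have := hp.length_le hp'
    omega
  · have hp' : IsDipathFrom (circA n d) (i : ZMod n) i [(i : ZMod n)] :=
      ⟨⟨by simp, by simp, List.isChain_singleton _⟩, by simp, by simp⟩
    have := hp.length_le hp'
    rw [List.length_singleton] at this
    omega
  · obtain ⟨p', hp', hlen', -⟩ := exists_dipath_add (n := n) hd q (n - (i - j)) (i : ZMod n)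
      (by omega) (by omega) (by omega)
    have hij' : i + (n - (i - j)) = j + n := by omega
    rw [← Nat.cast_add, hij', Nat.cast_add, ZMod.natCast_self, add_zero] at hp'
    have := hp.length_le hp'
    -- The two pieces have at least one arc each and at most `q + 1` in total.
    have hs' : s ≤ q * d := hs.trans (Nat.mul_le_mul_right d (by omega))
    have ht' : t ≤ q * d := ht.trans (Nat.mul_le_mul_right d (by omega))
    have hik := le_of_short_advance hi (by omega) hsk
    have hkj' := le_of_short_advance hk (by omega) htj
    omega
end
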